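/- Let E be a closed subset of ℂ^m. Then V_E ≡ 0 on ℂ^m if and only if every open neighborhood of E is non-thin at ∞. -/

import Mathlib

/-!
Suppose every open neighbourhood of `E` is non-thin. If `u ∈ 𝕃` with `u ≤ 0` on `E` and `ε > 0`,
then `F = {u < ε}` is an open neighbourhood of `E` and `u - ε ≤ 0` on `F`, so
`u - ε ≤ V_{F_R} → 0`. Hence `u ≤ 0`.

Conversely, suppose `V_E ≡ 0` and let `F ⊇ E` be open. Consider the joint upper limit
`W(z) = limsup V_{F_R}(y)` as `R → ∞` and `y → z` (`limGreen`), which merges the upper semicontinuous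
regularization with the limit in `R`. It belongs to `𝕃`:

* It is upper semicontinuous by construction.
* If `W < Re p + ε` on a circle in a complex line, compactness of the circle gives the same bound
  for `V_{F_R}` on all nearby parallel circles and all large `R`. The competitors defining `V_{F_R}`
  then satisfy it on the discs, and hence so does `W` (`subharmonic_limGreen`).
* Its growth is controlled by a Bernstein–Walsh inequality (`bernstein_walsh`): competitors that are
  nonpositive on a ball `B(x, ρ) ⊆ F` are at most `log (1 + |z - x| / ρ)`. This reduces to one
  variable, where a maximum principle on an annulus (`annulus_max`) compares a subharmonic function
  with `(1 + ε) log |w| + B - η |w|²`; the strictly superharmonic term `-η |w|²` makes the argument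
  local and allows harmonic polynomials of degree two as the only majorants.

Since `F` is open, `W ≤ 0` on `F ⊇ E`, so `W ≤ V_E = 0`, and `0 ≤ V_{F_R}(z)` has upper limit at
most `W(z) ≤ 0`.
-/

open Filter Metric

noncomputable section

/-- An upper semicontinuous `EReal`-valued function `u` (never `+∞`) on `U ⊆ ℂ` is
*subharmonic* on `U` if it satisfies the harmonic-polynomial maximum criterion:
whenever `u ≤ Re p` on a circle contained (with its disc) in `U`, for a complex
polynomial `p`, then `u ≤ Re p` throughout the corresponding closed disc. -/
def SubharmonicOn' (u : ℂ → EReal) (U : Set ℂ) : Prop :=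
  UpperSemicontinuousOn u U ∧ (∀ z ∈ U, u z < ⊤) ∧
  ∀ (c : ℂ) (r : ℝ), 0 < r → closedBall c r ⊆ U →
    ∀ p : Polynomial ℂ,
      (∀ z ∈ sphere c r, u z ≤ ((p.eval z).re : EReal)) →
      ∀ z ∈ closedBall c r, u z ≤ ((p.eval z).re : EReal)

/-- A function `u : ℂ^m → [-∞,∞)` is *plurisubharmonic* on `U` if it is upper
semicontinuous on `U`, nowhere `+∞` on `U`, and its restriction to every complex
line is subharmonic. -/
def PshOn {m : ℕ} (u : EuclideanSpace ℂ (Fin m) → EReal)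
    (U : Set (EuclideanSpace ℂ (Fin m))) : Prop :=
  UpperSemicontinuousOn u U ∧ (∀ z ∈ U, u z < ⊤) ∧
  ∀ (a b : EuclideanSpace ℂ (Fin m)), b ≠ 0 →
    SubharmonicOn' (fun w => u (a + w • b)) {w : ℂ | a + w • b ∈ U}

/-- The class `𝕃` of plurisubharmonic functions on `ℂ^m` of minimal growth:
`u(z) - log |z| ≤ O(1)` as `|z| → ∞`. -/
def MinGrowth {m : ℕ} (u : EuclideanSpace ℂ (Fin m) → EReal) : Prop :=
  PshOn u Set.univ ∧ ∃ C R₀ : ℝ, ∀ z, R₀ ≤ ‖z‖ → u z ≤ ((Real.log ‖z‖ + C : ℝ) : EReal)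

/-- The pluricomplex Green function (Siciak extremal function) of `E ⊆ ℂ^m`:
`V_E(z) = sup { u(z) : u ∈ 𝕃, u ≤ 0 on E }`. -/
def greenFn {m : ℕ} (E : Set (EuclideanSpace ℂ (Fin m)))
    (z : EuclideanSpace ℂ (Fin m)) : EReal :=
  sSup ((fun u => u z) '' {u | MinGrowth u ∧ ∀ x ∈ E, u x ≤ 0})

/-- The upper semicontinuous regularization `V_E*` of the Green function. -/
def greenFnStar {m : ℕ} (E : Set (EuclideanSpace ℂ (Fin m)))
    (z : EuclideanSpace ℂ (Fin m)) : EReal :=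
  Filter.limsup (greenFn E) (nhds z)

/-- `E ⊆ ℂ^m` is non-thin at `∞` if `lim_{R→∞} V_{E_R}(z) = 0` for all `z ∈ ℂ^m`,
where `E_R = E ∩ {|z| ≤ R}`. -/
def NonthinAtInfty {m : ℕ} (E : Set (EuclideanSpace ℂ (Fin m))) : Prop :=
  ∀ z, Tendsto (fun R : ℝ => greenFn (E ∩ closedBall 0 R) z) atTop (nhds (0 : EReal))

/-- `A ⊆ ℂ^m` is pluripolar if `A ⊆ {u = -∞}` for some plurisubharmonic `u ≢ -∞` on `ℂ^m`. -/
def Pluripolar {m : ℕ} (A : Set (EuclideanSpace ℂ (Fin m))) : Prop :=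
  ∃ u : EuclideanSpace ℂ (Fin m) → EReal, PshOn u Set.univ ∧ (∃ z, u z ≠ ⊥) ∧ ∀ a ∈ A, u a = ⊥

/-- The Robin constant `γ(K) = limsup_{z→∞} [V_K*(z) - log |z|]`.  The
`ℂ^m`-capacity is `C(K) = e^{-γ(K)}`, so that `log C(K) = -γ(K)`. -/
def robinConst {m : ℕ} (K : Set (EuclideanSpace ℂ (Fin m))) : EReal :=
  Filter.limsup (fun z => greenFnStar K z - ((Real.log ‖z‖ : ℝ) : EReal))
    (Bornology.cobounded (EuclideanSpace ℂ (Fin m)))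

/-! ### Preliminaries and stability of the class `𝕃` -/

open Topology

theorem ereal_add_coe_le_coe (x : EReal) (a b : ℝ) :
    x + (a : EReal) ≤ (b : EReal) ↔ x ≤ ((b - a : ℝ) : EReal) := by
  induction x with
  | bot => simp
  | top => simp [-EReal.coe_sub]
  | coe x =>
    rw [← EReal.coe_add, EReal.coe_le_coe_iff, EReal.coe_le_coe_iff]
    constructor <;> intro h <;> linarith

theorem le_of_forall_pos_of_continuous {x : EReal} {f : ℝ → ℝ} (hf : Continuous f)
    (h : ∀ ε : ℝ, 0 < ε → x ≤ (f ε : EReal)) : x ≤ (f 0 : EReal) :=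
  ge_of_tendsto (tendsto_nhdsWithin_of_tendsto_nhds
      ((continuous_coe_real_ereal.comp hf).tendsto 0) :
      Tendsto _ (𝓝[>] (0 : ℝ)) _)
    (eventually_nhdsWithin_of_forall h)

theorem usc_add_coe {X : Type*} [TopologicalSpace X] {u : X → EReal} {s : Set X} {g : X → ℝ}
    (hu : UpperSemicontinuousOn u s) (hg : ContinuousOn g s) :
    UpperSemicontinuousOn (fun z => u z + (g z : EReal)) s := by
  apply hu.add'
  · exact (continuous_coe_real_ereal.comp_continuousOn hg).upperSemicontinuousOn
  · intro x _
    exact EReal.continuousAt_add (by simp) (by simp)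

theorem MinGrowth.add_const {m : ℕ} {u : EuclideanSpace ℂ (Fin m) → EReal} (hu : MinGrowth u)
    (a : ℝ) : MinGrowth (fun z => u z + (a : EReal)) := by
  obtain ⟨⟨h1, h2, h3⟩, C, R₀, hC⟩ := hu
  refine ⟨⟨usc_add_coe h1 continuousOn_const, fun z hz => EReal.add_lt_top (h2 z hz).ne (by simp),
    fun x b hb => ?_⟩, C + a, R₀, fun z hz => ?_⟩
  · obtain ⟨k1, k2, k3⟩ := h3 x b hb
    refine ⟨usc_add_coe k1 continuousOn_const,
      fun z hz => EReal.add_lt_top (k2 z hz).ne (by simp), fun c r hr hc p hp z hz => ?_⟩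
    have key := k3 c r hr hc (p - Polynomial.C (a : ℂ)) (fun z hz => by
      simpa using (ereal_add_coe_le_coe _ _ _).1 (hp z hz)) z hz
    exact (ereal_add_coe_le_coe _ _ _).2 (by simpa using key)
  · rw [ereal_add_coe_le_coe]
    convert hC z hz using 2
    ring

/-- Minimum principle for `Re p`, obtained by applying the maximum modulus principle to `exp (-p)`. -/
theorem zero_le_re_of_sphere (p : Polynomial ℂ) {c : ℂ} {r : ℝ} (hr : 0 < r)
    (h : ∀ z ∈ sphere c r, 0 ≤ (p.eval z).re) {z : ℂ} (hz : z ∈ closedBall c r) :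
    0 ≤ (p.eval z).re := by
  have key := Complex.norm_le_of_forall_mem_frontier_norm_le (f := fun w => Complex.exp (-p.eval w))
    (U := ball c r) (C := 1) isBounded_ball
    (p.differentiable.neg.cexp.diffContOnCl)
    (fun w hw => by
      rw [frontier_ball c hr.ne'] at hw
      simpa [Complex.norm_exp] using h w hw)
    (z := z) (by rwa [closure_ball c hr.ne'])
  simpa [Complex.norm_exp] using key

theorem minGrowth_zero {m : ℕ} : MinGrowth (fun _ : EuclideanSpace ℂ (Fin m) => (0 : EReal)) := by
  refine ⟨⟨upperSemicontinuousOn_const, by simp, fun a b _ => ⟨upperSemicontinuousOn_const,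
    by simp, fun c r hr _ p hp z hz => ?_⟩⟩, 0, 1, fun z hz => ?_⟩
  · exact EReal.coe_nonneg.2 (zero_le_re_of_sphere p hr (fun z hz => EReal.coe_nonneg.1 (hp z hz)) hz)
  · rw [add_zero]
    exact EReal.coe_nonneg.2 (Real.log_nonneg hz)

/-! ### The maximum principle on an annulus -/

theorem log_norm_one_add_le {t : ℂ} (ht : ‖t‖ ≤ 1 / 2) :
    Real.log ‖1 + t‖ ≤ (t - t ^ 2 / 2).re + ‖t‖ ^ 3 := by
  have h := Complex.norm_log_sub_logTaylor_le 2 (z := t) (by linarith)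
  have h2 : Complex.logTaylor (2 + 1) t = t - t ^ 2 / 2 := by
    simp [Complex.logTaylor_succ, Complex.logTaylor_zero]; ring
  rw [h2] at h
  have h3 : (Complex.log (1 + t) - (t - t ^ 2 / 2)).re ≤ _ := (Complex.re_le_norm _).trans h
  rw [Complex.sub_re, Complex.log_re] at h3
  have h4 : (1 - ‖t‖)⁻¹ ≤ 2 := by
    rw [inv_le_comm₀ (by linarith) (by norm_num)]; linarith
  have h5 : ‖t‖ ^ (2 + 1) * (1 - ‖t‖)⁻¹ / ((2 : ℕ) + 1) ≤ ‖t‖ ^ 3 := by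
    have : 0 ≤ ‖t‖ ^ 3 := by positivity
    push_cast
    nlinarith
  linarith

/-- A subharmonic function cannot touch `A log |w| + B - η |w|²` from below at `w₀ ≠ 0`. Near `w₀` this
function agrees, up to `O(|w - w₀|³)`, with the real part of a quadratic polynomial minus
`η |w - w₀|²`, so on a small circle `v` lies below a harmonic polynomial whose value at the center
is strictly smaller. -/
theorem annulus_local {v : ℂ → EReal} (hv : SubharmonicOn' v Set.univ) {A B η : ℝ} (hA : 0 ≤ A)
    (hη : 0 < η) {w₀ : ℂ} (hw₀ : w₀ ≠ 0)
    (h : ∀ᶠ w in 𝓝 w₀, v w ≤ ((A * Real.log ‖w‖ + B - η * ‖w‖ ^ 2 : ℝ) : EReal)) :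
    v w₀ < ((A * Real.log ‖w₀‖ + B - η * ‖w₀‖ ^ 2 : ℝ) : EReal) := by
  have hn : 0 < ‖w₀‖ := norm_pos_iff.2 hw₀
  obtain ⟨δ, hδ, hball⟩ := Metric.eventually_nhds_iff.1 h
  obtain ⟨r, hr0, hr1, hr2, hr3⟩ : ∃ r : ℝ, 0 < r ∧ r < δ ∧ r ≤ ‖w₀‖ / 2 ∧
      A * r ≤ η / 2 * ‖w₀‖ ^ 3 := by
    have hpos : 0 < η / 2 * ‖w₀‖ ^ 3 / (A + 1) := by positivity
    refine ⟨min (δ / 2) (min (‖w₀‖ / 2) (η / 2 * ‖w₀‖ ^ 3 / (A + 1))), by positivity, ?_, ?_, ?_⟩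
    · exact (min_le_left _ _).trans_lt (by linarith)
    · exact (min_le_right _ _).trans (min_le_left _ _)
    · set r := min (δ / 2) (min (‖w₀‖ / 2) (η / 2 * ‖w₀‖ ^ 3 / (A + 1)))
      have hr : r ≤ η / 2 * ‖w₀‖ ^ 3 / (A + 1) := (min_le_right _ _).trans (min_le_right _ _)
      have hr0 : 0 < r := by positivity
      rw [le_div_iff₀ (by linarith)] at hr
      nlinarith
  -- `p` is the quadratic harmonic Taylor part of the barrier at `w₀` (with `T` standing for
  -- `(w - w₀) / w₀`), lowered by `η r² / 2`: half of the gap `η r²` on the circle of radius `r`; the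
  -- other half absorbs the cubic remainder of the logarithm.
  let T : Polynomial ℂ := Polynomial.C (w₀⁻¹) * (Polynomial.X - Polynomial.C w₀)
  let p : Polynomial ℂ :=
    Polynomial.C ((A * Real.log ‖w₀‖ + B - η * ‖w₀‖ ^ 2 - η * r ^ 2 / 2 : ℝ) : ℂ)
    + Polynomial.C (A : ℂ) * (T - Polynomial.C (1 / 2) * T ^ 2)
    - Polynomial.C ((2 * η : ℝ) * star w₀) * (Polynomial.X - Polynomial.C w₀)
  have hp : ∀ w, (p.eval w).re = A * Real.log ‖w₀‖ + B - η * ‖w₀‖ ^ 2 - η * r ^ 2 / 2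
      + A * ((w₀⁻¹ * (w - w₀)) - (w₀⁻¹ * (w - w₀)) ^ 2 / 2).re
      - 2 * η * (star w₀ * (w - w₀)).re := by
    intro w
    have : p.eval w = ((A * Real.log ‖w₀‖ + B - η * ‖w₀‖ ^ 2 - η * r ^ 2 / 2 : ℝ) : ℂ)
      + (A : ℂ) * ((w₀⁻¹ * (w - w₀)) - (w₀⁻¹ * (w - w₀)) ^ 2 / 2)
      - ((2 * η : ℝ) : ℂ) * (star w₀ * (w - w₀)) := by
      simp only [p, T, Polynomial.eval_add, Polynomial.eval_sub, Polynomial.eval_mul,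
        Polynomial.eval_C, Polynomial.eval_X, Polynomial.eval_pow]
      ring
    rw [this, Complex.sub_re, Complex.add_re, Complex.ofReal_re, Complex.re_ofReal_mul,
      Complex.re_ofReal_mul]
  have key := hv.2.2 w₀ r hr0 (Set.subset_univ _) p (fun w hw => ?_) w₀
    (mem_closedBall_self hr0.le)
  · refine key.trans_lt ?_
    rw [EReal.coe_lt_coe_iff, hp]
    have : 0 < η * r ^ 2 := by positivity
    simp
    linarith
  · have hwr : ‖w - w₀‖ = r := by simpa [dist_eq_norm] using hw
    refine (hball (by rw [dist_eq_norm, hwr]; exact hr1)).trans ?_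
    rw [EReal.coe_le_coe_iff, hp]
    set t := w₀⁻¹ * (w - w₀) with ht
    have htn : ‖t‖ = r / ‖w₀‖ := by rw [ht, norm_mul, norm_inv, hwr]; ring
    have hw1 : w = w₀ * (1 + t) := by rw [ht]; field_simp; ring
    have ht2 : ‖t‖ ≤ 1 / 2 := by rw [htn, div_le_iff₀ hn]; linarith
    have h1t : (1 + t) ≠ 0 := by
      intro h0
      have : t = -1 := by linear_combination h0
      rw [this] at ht2; norm_num at ht2
    have hlog : Real.log ‖w‖ = Real.log ‖w₀‖ + Real.log ‖1 + t‖ := by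
      rw [hw1, norm_mul, Real.log_mul hn.ne' (norm_ne_zero_iff.2 h1t)]
    have hl := mul_le_mul_of_nonneg_left (log_norm_one_add_le ht2) hA
    have hcube : A * ‖t‖ ^ 3 ≤ η * r ^ 2 / 2 := by
      rw [htn, div_pow, ← mul_div_assoc, div_le_iff₀ (by positivity)]
      have := mul_le_mul_of_nonneg_right hr3 (sq_nonneg r)
      linarith
    have hsq : ‖w‖ ^ 2 = ‖w₀‖ ^ 2 + 2 * (star w₀ * (w - w₀)).re + r ^ 2 := by
      rw [← hwr, Complex.sq_norm, Complex.sq_norm, Complex.sq_norm]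
      simp [Complex.normSq_apply]
      ring
    rw [hlog, hsq]
    linarith

theorem annulus_max {v : ℂ → EReal} (hv : SubharmonicOn' v Set.univ) {A B η ρ R : ℝ} (hA : 0 ≤ A)
    (hη : 0 < η) (hρ : 0 < ρ)
    (h1 : ∀ w, ‖w‖ = ρ → v w ≤ ((A * Real.log ‖w‖ + B - η * ‖w‖ ^ 2 : ℝ) : EReal))
    (h2 : ∀ w, ‖w‖ = R → v w ≤ ((A * Real.log ‖w‖ + B - η * ‖w‖ ^ 2 : ℝ) : EReal))
    {w : ℂ} (hw1 : ρ ≤ ‖w‖) (hw2 : ‖w‖ ≤ R) :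
    v w ≤ ((A * Real.log ‖w‖ + B - η * ‖w‖ ^ 2 : ℝ) : EReal) := by
  set g : ℂ → ℝ := fun w => A * Real.log ‖w‖ + B - η * ‖w‖ ^ 2 with hg
  let K : Set ℂ := {w | ρ ≤ ‖w‖ ∧ ‖w‖ ≤ R}
  have hK : IsCompact K := by
    refine (isCompact_closedBall (0 : ℂ) R).of_isClosed_subset ?_ fun w hw => by simpa using hw.2
    exact (isClosed_le continuous_const continuous_norm).inter
      (isClosed_le continuous_norm continuous_const)
  have hgc : ContinuousOn (fun w => - g w) K := by
    have : ContinuousOn (fun w : ℂ => Real.log ‖w‖) K :=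
      continuous_norm.continuousOn.log fun w hw => (hρ.trans_le hw.1).ne'
    exact (((continuousOn_const.mul this).add continuousOn_const).sub (by fun_prop)).neg
  obtain ⟨w₀, hw₀, hmax⟩ := UpperSemicontinuousOn.exists_isMaxOn (s := K) ⟨w, hw1, hw2⟩ hK
    (usc_add_coe (hv.1.mono (Set.subset_univ K)) hgc)
  have conv : ∀ (z : ℂ) (M : ℝ), v z + ((- g z : ℝ) : EReal) ≤ (M : EReal) ↔
      v z ≤ ((g z + M : ℝ) : EReal) := by
    intro z M
    rw [ereal_add_coe_le_coe, sub_neg_eq_add, add_comm]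
  have conv0 : ∀ z : ℂ, v z + ((- g z : ℝ) : EReal) ≤ 0 ↔ v z ≤ (g z : EReal) := by
    intro z
    have := conv z 0
    rwa [add_zero] at this
  rw [← conv0]
  refine (hmax ⟨hw1, hw2⟩).trans ?_
  change v w₀ + ((- g w₀ : ℝ) : EReal) ≤ 0
  -- A positive maximum `M` of `v - g` is attained at an interior point, where `g + M` touches `v`.
  by_contra! hpos
  rcases hw₀.1.eq_or_lt with he | hlt1
  · exact hpos.not_ge ((conv0 _).2 (h1 _ he.symm))
  rcases hw₀.2.eq_or_lt with he | hlt2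
  · exact hpos.not_ge ((conv0 _).2 (h2 _ he))
  have hvtop : v w₀ + ((- g w₀ : ℝ) : EReal) ≠ ⊤ :=
    (EReal.add_lt_top (hv.2.1 w₀ trivial).ne (by simp)).ne
  lift v w₀ + ((- g w₀ : ℝ) : EReal) to ℝ using ⟨hvtop, hpos.ne_bot⟩ with M hM
  have hnhds : ∀ᶠ w in 𝓝 w₀, v w ≤ ((A * Real.log ‖w‖ + (B + M) - η * ‖w‖ ^ 2 : ℝ) : EReal) := by
    filter_upwards [continuous_norm.continuousAt.eventually (lt_mem_nhds hlt1),
      continuous_norm.continuousAt.eventually (gt_mem_nhds hlt2)] with z hz1 hz2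
    have := hmax (show z ∈ K from ⟨le_of_lt hz1, le_of_lt hz2⟩)
    change v z + ((- g z : ℝ) : EReal) ≤ v w₀ + ((- g w₀ : ℝ) : EReal) at this
    rw [← hM, conv] at this
    convert this using 2
    simp only [hg]; ring
  have hlt := annulus_local hv hA hη (norm_pos_iff.1 (hρ.trans hlt1)) hnhds
  apply hlt.not_ge
  have : ((A * Real.log ‖w₀‖ + (B + M) - η * ‖w₀‖ ^ 2 : ℝ) : EReal) = (M : EReal) + (g w₀ : ℝ) := by
    rw [← EReal.coe_add, EReal.coe_eq_coe_iff]; simp only [hg]; ring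
  rw [this, hM, add_assoc, ← EReal.coe_add, neg_add_cancel]
  simp

/-! ### The Bernstein–Walsh inequality -/

theorem bernstein_walsh_one {v : ℂ → EReal} (hv : SubharmonicOn' v Set.univ) {ρ C R₀ : ℝ}
    (hρ : 0 < ρ) (h0 : ∀ w, ‖w‖ ≤ ρ → v w ≤ 0)
    (hC : ∀ w, R₀ ≤ ‖w‖ → v w ≤ ((Real.log ‖w‖ + C : ℝ) : EReal)) {w : ℂ} (hw : ρ ≤ ‖w‖) :
    v w ≤ ((Real.log (‖w‖ / ρ) : ℝ) : EReal) := by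
  have hwpos : 0 < ‖w‖ := hρ.trans_le hw
  have step : ∀ ε : ℝ, 0 < ε → v w ≤ (((1 + ε) * Real.log (‖w‖ / ρ) : ℝ) : EReal) := by
    intro ε hε
    -- With slope `1 + ε > 1` the barrier dominates `log |w| + C` on a sufficiently large circle.
    obtain ⟨R, hR1, hR2, hR3⟩ : ∃ R : ℝ, ‖w‖ ≤ R ∧ R₀ ≤ R ∧
        (C + (1 + ε) * Real.log ρ) / ε ≤ Real.log R :=
      ((eventually_ge_atTop _).and ((eventually_ge_atTop _).and
        (Real.tendsto_log_atTop.eventually_ge_atTop _))).exists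
    have hRpos : 0 < R := hwpos.trans_le hR1
    have step2 : ∀ η : ℝ, 0 < η →
        v w ≤ (((1 + ε) * Real.log (‖w‖ / ρ) + η * (R ^ 2 - ‖w‖ ^ 2) : ℝ) : EReal) := by
      intro η hη
      -- `B` is chosen so that the barrier is `(1 + ε) log (|w| / ρ) + η (R² - |w|²)`.
      have key := annulus_max hv (A := 1 + ε) (B := η * R ^ 2 - (1 + ε) * Real.log ρ) (η := η)
        (ρ := ρ) (R := R) (by linarith) hη hρ (fun z hz => ?_) (fun z hz => ?_) hw hR1
      · convert key using 2
        rw [Real.log_div hwpos.ne' hρ.ne']; ring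
      · refine (h0 z hz.le).trans (EReal.coe_nonneg.2 ?_)
        rw [hz]
        have : ρ ^ 2 ≤ R ^ 2 := by gcongr; exact hw.trans hR1
        nlinarith
      · refine (hC z (by rwa [hz])).trans (EReal.coe_le_coe_iff.2 ?_)
        rw [hz]
        rw [div_le_iff₀ hε] at hR3
        linarith
    simpa using le_of_forall_pos_of_continuous (by fun_prop) step2
  simpa using le_of_forall_pos_of_continuous (by fun_prop) step

/-- A function of class `𝕃` that is nonpositive on a ball satisfies a logarithmic bound depending only
on the ball. The majorant `log (1 + |z - x| / ρ)` is used in place of `log⁺ (|z - x| / ρ)` because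
it is given by one continuous formula. -/
theorem bernstein_walsh {m : ℕ} {u : EuclideanSpace ℂ (Fin m) → EReal} (hu : MinGrowth u)
    {x : EuclideanSpace ℂ (Fin m)} {ρ : ℝ} (hρ : 0 < ρ) (h0 : ∀ y ∈ closedBall x ρ, u y ≤ 0)
    (z : EuclideanSpace ℂ (Fin m)) : u z ≤ ((Real.log (1 + ‖z - x‖ / ρ) : ℝ) : EReal) := by
  have hnn : 0 ≤ ‖z - x‖ / ρ := by positivity
  rcases le_or_gt ‖z - x‖ ρ with hle | hgt
  · exact (h0 z (by rwa [mem_closedBall, dist_eq_norm])).trans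
      (EReal.coe_nonneg.2 (Real.log_nonneg (by linarith)))
  have hd : 0 < ‖z - x‖ := hρ.trans hgt
  obtain ⟨⟨-, -, h3⟩, C, R₀, hC⟩ := hu
  -- Restrict to the line `w ↦ x + w (z - x)`, on which `z` corresponds to `w = 1`.
  have hv := h3 x (z - x) (norm_pos_iff.1 hd)
  have huniv : {w : ℂ | x + w • (z - x) ∈ Set.univ} = Set.univ := by simp
  rw [huniv] at hv
  have key := bernstein_walsh_one hv (ρ := ρ / ‖z - x‖)
    (C := C + Real.log (‖z - x‖ + ‖x‖)) (R₀ := max 1 ((|R₀| + 1 + ‖x‖) / ‖z - x‖)) (by positivity)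
    (fun w hw => h0 _ ?_) (fun w hw => ?_) (w := 1) ?_
  · simp only [one_smul, add_sub_cancel] at key
    refine key.trans (EReal.coe_le_coe_iff.2 ?_)
    rw [norm_one, one_div_div]
    exact Real.log_le_log (by positivity) (by linarith)
  · rw [le_div_iff₀ hd] at hw
    simpa [dist_eq_norm, norm_smul] using hw
  · have hw1 : 1 ≤ ‖w‖ := (le_max_left _ _).trans hw
    have hw2 := (le_max_right _ _).trans hw
    rw [div_le_iff₀ hd, ← norm_smul] at hw2
    have hlow : ‖w • (z - x)‖ - ‖x‖ ≤ ‖x + w • (z - x)‖ := by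
      have := norm_sub_norm_le (w • (z - x)) (-x)
      rwa [norm_neg, sub_neg_eq_add, add_comm (w • (z - x))] at this
    have hup : ‖x + w • (z - x)‖ ≤ ‖w‖ * (‖z - x‖ + ‖x‖) := by
      refine (norm_add_le _ _).trans ?_
      rw [norm_smul]
      nlinarith [norm_nonneg x]
    refine (hC _ (by linarith [le_abs_self R₀])).trans (EReal.coe_le_coe_iff.2 ?_)
    have hl := Real.log_le_log (by linarith [abs_nonneg R₀]) hup
    rw [Real.log_mul (by positivity) (by positivity)] at hl
    linarith
  · rw [norm_one, div_le_one hd]; exact hgt.le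

/-! ### Green functions -/

theorem le_greenFn {m : ℕ} {E : Set (EuclideanSpace ℂ (Fin m))}
    {u : EuclideanSpace ℂ (Fin m) → EReal} (hu : MinGrowth u) (h : ∀ x ∈ E, u x ≤ 0)
    (z : EuclideanSpace ℂ (Fin m)) : u z ≤ greenFn E z :=
  le_sSup ⟨u, ⟨hu, h⟩, rfl⟩

theorem greenFn_le_iff {m : ℕ} {E : Set (EuclideanSpace ℂ (Fin m))}
    {z : EuclideanSpace ℂ (Fin m)} {c : EReal} :
    greenFn E z ≤ c ↔ ∀ u, MinGrowth u → (∀ x ∈ E, u x ≤ 0) → u z ≤ c := by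
  simp only [greenFn, sSup_le_iff, Set.forall_mem_image, Set.mem_ofPred_eq, and_imp]

theorem greenFn_nonneg {m : ℕ} (E : Set (EuclideanSpace ℂ (Fin m)))
    (z : EuclideanSpace ℂ (Fin m)) : 0 ≤ greenFn E z :=
  le_greenFn minGrowth_zero (fun _ _ => le_rfl) z

theorem greenFn_anti {m : ℕ} {E F : Set (EuclideanSpace ℂ (Fin m))} (h : E ⊆ F)
    (z : EuclideanSpace ℂ (Fin m)) : greenFn F z ≤ greenFn E z :=
  greenFn_le_iff.2 fun _ hu h0 => le_greenFn hu (fun x hx => h0 x (h hx)) z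

theorem greenFn_le_zero {m : ℕ} {E : Set (EuclideanSpace ℂ (Fin m))}
    {z : EuclideanSpace ℂ (Fin m)} (h : z ∈ E) : greenFn E z ≤ 0 :=
  greenFn_le_iff.2 fun _ _ h0 => h0 z h

/-! ### The joint upper limit of the Green functions of the truncations -/

/-- The joint upper limit of `V_{F_R}(y)` as `R → ∞` and `y → z`. The regularization in
the space variable makes it upper semicontinuous without further argument. -/
def limGreen {m : ℕ} (F : Set (EuclideanSpace ℂ (Fin m))) (z : EuclideanSpace ℂ (Fin m)) : EReal :=
  limsup (fun q : ℝ × EuclideanSpace ℂ (Fin m) => greenFn (F ∩ closedBall 0 q.1) q.2)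
    (atTop ×ˢ 𝓝 z)

theorem usc_limGreen {m : ℕ} (F : Set (EuclideanSpace ℂ (Fin m))) :
    UpperSemicontinuous (limGreen F) := by
  intro z c hc
  obtain ⟨c', hc1, hc2⟩ := exists_between (show limGreen F z < c from hc)
  obtain ⟨pa, ha, pb, hb, hab⟩ := eventually_prod_iff.1 (eventually_lt_of_limsup_lt hc1)
  filter_upwards [eventually_eventually_nhds.2 hb] with y hy
  refine lt_of_le_of_lt (limsup_le_of_le (h := ?_)) hc2
  filter_upwards [ha.prod_mk hy] with q hq
  exact (hab hq.1 hq.2).le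

/-- The polynomial criterion for subharmonicity of `limGreen F` along a complex line. -/
theorem subharmonic_limGreen {m : ℕ} (F : Set (EuclideanSpace ℂ (Fin m)))
    {a b : EuclideanSpace ℂ (Fin m)} (hb : b ≠ 0) {c : ℂ} {r : ℝ} (hr : 0 < r) (p : Polynomial ℂ)
    (hp : ∀ w ∈ sphere c r, limGreen F (a + w • b) ≤ ((p.eval w).re : EReal)) {w : ℂ}
    (hw : w ∈ closedBall c r) : limGreen F (a + w • b) ≤ ((p.eval w).re : EReal) := by
  have hpc : Continuous fun w : ℂ => (p.eval w).re := Complex.continuous_re.comp p.continuous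
  have step : ∀ ε : ℝ, 0 < ε → limGreen F (a + w • b) ≤ (((p.eval w).re + ε : ℝ) : EReal) := by
    intro ε hε
    have hloc : ∀ w₀ ∈ sphere c r, {q : ℂ × (ℝ × EuclideanSpace ℂ (Fin m)) |
        greenFn (F ∩ closedBall 0 q.2.1) (q.2.2 + q.1 • b) ≤ (((p.eval q.1).re + ε : ℝ) : EReal)} ∈
        𝓝 w₀ ×ˢ (atTop ×ˢ 𝓝 a) := by
      intro w₀ hw₀
      have hlt : limGreen F (a + w₀ • b) < (((p.eval w₀).re + ε / 2 : ℝ) : EReal) :=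
        (hp w₀ hw₀).trans_lt (EReal.coe_lt_coe_iff.2 (by linarith))
      have ht : Tendsto (fun q : ℂ × (ℝ × EuclideanSpace ℂ (Fin m)) => (q.2.1, q.2.2 + q.1 • b))
          (𝓝 w₀ ×ˢ (atTop ×ˢ 𝓝 a)) (atTop ×ˢ 𝓝 (a + w₀ • b)) :=
        (tendsto_fst.comp tendsto_snd).prodMk
          ((tendsto_snd.comp tendsto_snd).add (tendsto_fst.smul_const b))
      have hc : ∀ᶠ q : ℂ × (ℝ × EuclideanSpace ℂ (Fin m)) in 𝓝 w₀ ×ˢ (atTop ×ˢ 𝓝 a),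
          (p.eval w₀).re - ε / 2 < (p.eval q.1).re :=
        tendsto_fst.eventually (hpc.continuousAt.eventually (lt_mem_nhds (by linarith)))
      filter_upwards [ht.eventually (eventually_lt_of_limsup_lt hlt), hc] with q hq1 hq2
      exact hq1.le.trans (EReal.coe_le_coe_iff.2 (by linarith))
    -- By compactness of the circle, the bound holds on all nearby parallel circles, for all large `R`.
    have hall : ∀ᶠ q : ℝ × EuclideanSpace ℂ (Fin m) in atTop ×ˢ 𝓝 a, ∀ w₀ ∈ sphere c r,
        greenFn (F ∩ closedBall 0 q.1) (q.2 + w₀ • b) ≤ (((p.eval w₀).re + ε : ℝ) : EReal) := by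
      obtain ⟨pa, ha, pb, hb, hab⟩ :=
        eventually_prod_iff.1 ((isCompact_sphere c r).mem_nhdsSet_prod_of_forall hloc)
      filter_upwards [hb] with q hq w₀ hw₀
      exact hab (ha.self_of_nhdsSet w₀ hw₀) hq
    -- Each competitor satisfies the criterion for `p + ε`, so the bound passes to the discs.
    have hdisc : ∀ᶠ q : ℝ × EuclideanSpace ℂ (Fin m) in atTop ×ˢ 𝓝 a,
        greenFn (F ∩ closedBall 0 q.1) (q.2 + w • b) ≤ (((p.eval w).re + ε : ℝ) : EReal) := by
      filter_upwards [hall] with q hq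
      refine greenFn_le_iff.2 fun u hu h0 => ?_
      have := (hu.1.2.2 q.2 b hb).2.2 c r hr (by simp) (p + Polynomial.C (ε : ℂ))
        (fun z hz => by simpa using (le_greenFn hu h0 _).trans (hq z hz)) w hw
      simpa using this
    have ht : Tendsto (fun q : ℝ × EuclideanSpace ℂ (Fin m) => (q.1, q.2 - w • b))
        (atTop ×ˢ 𝓝 (a + w • b)) (atTop ×ˢ 𝓝 a) := by
      refine tendsto_fst.prodMk ?_
      have := (tendsto_snd (f := (atTop : Filter ℝ)) (g := 𝓝 (a + w • b))).sub_const (w • b)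
      rwa [add_sub_cancel_right] at this
    refine limsup_le_of_le (h := ?_)
    filter_upwards [ht.eventually hdisc] with q hq
    simpa using hq
  simpa using le_of_forall_pos_of_continuous (by fun_prop) step

theorem limGreen_le_log {m : ℕ} {F : Set (EuclideanSpace ℂ (Fin m))}
    {x : EuclideanSpace ℂ (Fin m)} {ρ : ℝ} (hρ : 0 < ρ) (hF : closedBall x ρ ⊆ F)
    (z : EuclideanSpace ℂ (Fin m)) :
    limGreen F z ≤ ((Real.log (1 + ‖z - x‖ / ρ) : ℝ) : EReal) := by
  have hle : ∀ᶠ q : ℝ × EuclideanSpace ℂ (Fin m) in atTop ×ˢ 𝓝 z,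
      greenFn (F ∩ closedBall 0 q.1) q.2 ≤ ((Real.log (1 + ‖q.2 - x‖ / ρ) : ℝ) : EReal) := by
    filter_upwards [tendsto_fst.eventually (eventually_ge_atTop (‖x‖ + ρ))] with q hq
    refine greenFn_le_iff.2 fun u hu h0 => bernstein_walsh hu hρ (fun y hy => h0 y ⟨hF hy, ?_⟩) _
    exact closedBall_subset_closedBall' (by rw [dist_zero_right]; linarith) hy
  refine (limsup_le_limsup hle).trans (Tendsto.limsup_eq ?_).le
  have hcont : Continuous fun y => ((Real.log (1 + ‖y - x‖ / ρ) : ℝ) : EReal) := by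
    refine continuous_coe_real_ereal.comp (Continuous.log (by fun_prop) fun y => ?_)
    have : 0 ≤ ‖y - x‖ / ρ := by positivity
    linarith
  exact (hcont.tendsto z).comp tendsto_snd

theorem minGrowth_limGreen {m : ℕ} {F : Set (EuclideanSpace ℂ (Fin m))}
    {x : EuclideanSpace ℂ (Fin m)} {ρ : ℝ} (hρ : 0 < ρ) (hF : closedBall x ρ ⊆ F) :
    MinGrowth (limGreen F) := by
  have htop : ∀ z, limGreen F z < ⊤ := fun z => (limGreen_le_log hρ hF z).trans_lt (by simp)
  refine ⟨⟨(usc_limGreen F).upperSemicontinuousOn _, fun z _ => htop z, fun a b hb => ⟨?_,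
    fun w _ => htop _, fun c r hr _ p hp w hw => subharmonic_limGreen F hb hr p hp hw⟩⟩,
    Real.log (1 + (1 + ‖x‖) / ρ), 1, fun z hz => ?_⟩
  · exact ((usc_limGreen F).comp (by fun_prop)).upperSemicontinuousOn _
  · refine (limGreen_le_log hρ hF z).trans (EReal.coe_le_coe_iff.2 ?_)
    have hx := norm_nonneg x
    rw [← Real.log_mul (by linarith) (by positivity)]
    refine Real.log_le_log (by positivity) ?_
    have h1 : ‖z - x‖ ≤ ‖z‖ * (1 + ‖x‖) := (norm_sub_le z x).trans (by nlinarith)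
    calc 1 + ‖z - x‖ / ρ ≤ ‖z‖ + ‖z‖ * (1 + ‖x‖) / ρ := by gcongr
      _ = _ := by ring

theorem limGreen_le_zero {m : ℕ} {F : Set (EuclideanSpace ℂ (Fin m))} (hF : IsOpen F)
    {z : EuclideanSpace ℂ (Fin m)} (hz : z ∈ F) : limGreen F z ≤ 0 := by
  refine limsup_le_of_le (h := ?_)
  filter_upwards [(eventually_ge_atTop (‖z‖ + 1)).prod_mk
    ((hF.eventually_mem hz).and (ball_mem_nhds z one_pos))] with q hq
  obtain ⟨hR, hqF, hqz⟩ := hq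
  refine greenFn_le_zero ⟨hqF, ?_⟩
  exact closedBall_subset_closedBall' (by rw [dist_zero_right]; linarith)
    (ball_subset_closedBall hqz)

/-! ### The two implications -/

theorem nonthin_of_greenFn_eq_zero {m : ℕ} {E F : Set (EuclideanSpace ℂ (Fin m))}
    (hE : ∀ z, greenFn E z = 0) (hF : IsOpen F) (hEF : E ⊆ F) : NonthinAtInfty F := by
  obtain ⟨x, hx⟩ : E.Nonempty := by
    by_contra! hne
    -- The constant function `1` competes for the empty set.
    have := le_greenFn (E := E) (minGrowth_zero.add_const 1) (by simp [hne]) 0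
    rw [hE] at this
    simp at this
    exact this.not_gt zero_lt_one
  obtain ⟨ρ, hρ, hball⟩ := Metric.nhds_basis_closedBall.mem_iff.1 (hF.mem_nhds (hEF hx))
  intro z
  have hlim : limGreen F z ≤ 0 :=
    (le_greenFn (minGrowth_limGreen hρ hball) (fun y hy => limGreen_le_zero hF (hEF hy)) z).trans
      (hE z).le
  refine tendsto_of_le_liminf_of_limsup_le ?_ ?_
  · exact le_liminf_of_le (h := Eventually.of_forall fun R => greenFn_nonneg _ _)
  · refine le_trans ?_ hlim
    have ht : Tendsto (fun R : ℝ => (R, z)) atTop (atTop ×ˢ 𝓝 z) :=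
      tendsto_id.prodMk tendsto_const_nhds
    refine le_of_forall_gt fun c hc => ?_
    obtain ⟨c', hc1, hc2⟩ := exists_between hc
    refine (limsup_le_of_le (h := ?_)).trans_lt hc2
    filter_upwards [ht.eventually (eventually_lt_of_limsup_lt hc1)] with R hR
    exact hR.le

theorem greenFn_eq_zero_of_nonthin {m : ℕ} {E : Set (EuclideanSpace ℂ (Fin m))}
    (h : ∀ F : Set (EuclideanSpace ℂ (Fin m)), IsOpen F → E ⊆ F → NonthinAtInfty F)
    (z : EuclideanSpace ℂ (Fin m)) : greenFn E z = 0 := by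
  refine le_antisymm (greenFn_le_iff.2 fun u hu h0 => ?_) (greenFn_nonneg _ _)
  have step : ∀ ε : ℝ, 0 < ε → u z ≤ (ε : EReal) := by
    intro ε hε
    have hopen : IsOpen {y | u y < (ε : EReal)} :=
      (upperSemicontinuousOn_univ_iff.1 hu.1.1).isOpen_preimage _
    have hnon := h _ hopen (fun y hy => (h0 y hy).trans_lt (EReal.coe_pos.2 hε)) z
    have hle : u z + ((-ε : ℝ) : EReal) ≤ 0 := by
      refine ge_of_tendsto' hnon fun R => le_greenFn (hu.add_const (-ε)) (fun y hy => ?_) z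
      have := (ereal_add_coe_le_coe (u y) (-ε) 0).2 (by simpa using (le_of_lt hy.1))
      simpa using this
    have := (ereal_add_coe_le_coe (u z) (-ε) 0).1 (by simpa using hle)
    simpa using this
  simpa using le_of_forall_pos_of_continuous continuous_id step

/-- **Theorem 2.** For a closed set `E ⊆ ℂ^m`, `V_E ≡ 0` iff every open neighborhood
of `E` is non-thin at `∞`. -/
theorem greenFn_eq_zero_iff_forall_open_nonthin {m : ℕ}
    (E : Set (EuclideanSpace ℂ (Fin m))) (hE : IsClosed E) :
    (∀ z, greenFn E z = 0) ↔
      ∀ F : Set (EuclideanSpace ℂ (Fin m)), IsOpen F → E ⊆ F → NonthinAtInfty F := by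
  exact ⟨fun h F hF hEF => nonthin_of_greenFn_eq_zero h hF hEF, greenFn_eq_zero_of_nonthin⟩

end
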